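/- Let k and n be positive integers. If F is a pairwise-intersecting family of k-element subsets of [n] such that the intersection of all members of F is empty, then there exists a shifted family F' of k-element subsets of [n] that is pairwise-intersecting, has empty intersection of all its members, and satisfies |F'| ≥ |F|. -/

import Mathlib

/-!
The proof is by shifting. The map `shift i j`, `i < j`, replaces `j` by `i` in each member of the
family where this gives a new set; it keeps the size of the family, uniformity and the intersection
property, and lowers the total sum of all elements, so repeated shifting ends in a stable family
(`exists_stable`). The only thing that can go wrong is that the family becomes trivial.

Suppose a shift at `(a, b)` makes a nontrivial family trivial. Then every member meets `{a, b}`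
(`meets_of_trivial`), so all `k`-sets containing both `a` and `b` may be added. Now shift only inside
`S = [n] \ {a, b}`, which does not affect how members meet `{a, b}`. In the stable family, a member
containing `a` but not `b` can be pushed to `{a} ∪ T`, and one containing `b` but not `a` to
`{b} ∪ T`, where `T` is the initial segment of `S` of size `k - 1` (`push_to_initial`). Hence the
family contains all `k`-subsets of the `(k+1)`-set `Y = {a, b} ∪ T`. Containing all `k`-subsets of
some `(k+1)`-set implies nontriviality and survives every shift (`HasSimplex.shift`), although the
`(k+1)`-set may change; so from here one can shift over all of `[n]` without obstruction.
-/

open Finset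

/-- A family `𝓕` of subsets of `[n] = {1,…,n}` is shifted if for all `i < j` in `[n]`,
whenever `F ∈ 𝓕` with `j ∈ F` and `i ∉ F`, also `(F \ {j}) ∪ {i} ∈ 𝓕`. -/
def IsShifted (n : ℕ) (𝓕 : Finset (Finset ℕ)) : Prop :=
  ∀ i j : ℕ, i ∈ Finset.Icc 1 n → j ∈ Finset.Icc 1 n → i < j →
    ∀ F ∈ 𝓕, j ∈ F → i ∉ F → insert i (F.erase j) ∈ 𝓕

/-! ### Shifts and stable families -/

/-- The image of `A` under the `(i, j)`-shift of the family `𝓕`: `j` is replaced by `i` if this is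
possible and the resulting set is not yet in `𝓕`. -/
def shiftSet (i j : ℕ) (𝓕 : Finset (Finset ℕ)) (A : Finset ℕ) : Finset ℕ :=
  if j ∈ A ∧ i ∉ A ∧ insert i (A.erase j) ∉ 𝓕 then insert i (A.erase j) else A

/-- The `(i, j)`-shift of the family `𝓕`. -/
def shift (i j : ℕ) (𝓕 : Finset (Finset ℕ)) : Finset (Finset ℕ) :=
  𝓕.image (shiftSet i j 𝓕)

/-- The family `𝓕` consists of pairwise intersecting `k`-subsets of `[n]`. -/
def IsUnifInt (n k : ℕ) (𝓕 : Finset (Finset ℕ)) : Prop :=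
  (∀ F ∈ 𝓕, F ⊆ Finset.Icc 1 n) ∧ (∀ F ∈ 𝓕, F.card = k) ∧
    ∀ A ∈ 𝓕, ∀ B ∈ 𝓕, (A ∩ B).Nonempty

/-- The family `𝓕` is closed under replacing an element of `S` by a smaller element of `S`;
for `S = [n]` this unfolds to `IsShifted n 𝓕`. -/
def IsStable (S : Finset ℕ) (𝓕 : Finset (Finset ℕ)) : Prop :=
  ∀ i j : ℕ, i ∈ S → j ∈ S → i < j → ∀ F ∈ 𝓕, j ∈ F → i ∉ F → insert i (F.erase j) ∈ 𝓕

/-- The family `𝓕` contains all `k`-subsets of some `(k+1)`-subset `Y` of `[n]`; these subsets are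
written as `Y.erase y`. -/
def HasSimplex (n k : ℕ) (𝓕 : Finset (Finset ℕ)) : Prop :=
  ∃ Y : Finset ℕ, Y ⊆ Finset.Icc 1 n ∧ Y.card = k + 1 ∧ ∀ y ∈ Y, Y.erase y ∈ 𝓕

lemma mem_shift_iff {i j : ℕ} {𝓕 : Finset (Finset ℕ)} {A : Finset ℕ} :
    A ∈ shift i j 𝓕 ↔ (A ∈ 𝓕 ∧ (j ∈ A → i ∉ A → insert i (A.erase j) ∈ 𝓕)) ∨
      (A ∉ 𝓕 ∧ ∃ B ∈ 𝓕, j ∈ B ∧ i ∉ B ∧ A = insert i (B.erase j)) := by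
  simp only [shift, shiftSet, Finset.mem_image]
  constructor
  · rintro ⟨B, hB, rfl⟩
    split_ifs with h
    · exact Or.inr ⟨h.2.2, B, hB, h.1, h.2.1, rfl⟩
    · exact Or.inl ⟨hB, by tauto⟩
  · rintro (⟨hA, h⟩ | ⟨hA, B, hB, hj, hi, rfl⟩)
    · exact ⟨A, hA, if_neg (by tauto)⟩
    · exact ⟨B, hB, if_pos ⟨hj, hi, hA⟩⟩

lemma erase_insert_inj {i j : ℕ} {A B : Finset ℕ} (hjA : j ∈ A) (hiA : i ∉ A) (hjB : j ∈ B)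
    (hiB : i ∉ B) (h : insert i (A.erase j) = insert i (B.erase j)) : A = B := by
  ext x
  have := Finset.ext_iff.1 h x
  simp only [Finset.mem_insert, Finset.mem_erase] at this
  by_cases hxi : x = i
  · subst hxi; tauto
  · by_cases hxj : x = j
    · subst hxj; tauto
    · tauto

lemma shiftSet_injOn (i j : ℕ) (𝓕 : Finset (Finset ℕ)) :
    Set.InjOn (shiftSet i j 𝓕) 𝓕 := by
  intro A hA B hB h
  simp only [shiftSet] at h
  split_ifs at h with h1 h2 h2
  · exact erase_insert_inj h1.1 h1.2.1 h2.1 h2.2.1 h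
  · exact absurd (h ▸ hB) h1.2.2
  · exact absurd (h ▸ hA) h2.2.2
  · exact h

lemma card_shift (i j : ℕ) (𝓕 : Finset (Finset ℕ)) : (shift i j 𝓕).card = 𝓕.card :=
  Finset.card_image_of_injOn (shiftSet_injOn i j 𝓕)

lemma sum_insert_erase_lt {i j : ℕ} (hij : i < j) {A : Finset ℕ} (hj : j ∈ A) (hi : i ∉ A) :
    ∑ x ∈ insert i (A.erase j), x < ∑ x ∈ A, x := by
  rw [Finset.sum_insert (by simp [hi]), ← Finset.add_sum_erase A (fun x => x) hj]
  omega

lemma weight_shift_lt {i j : ℕ} (hij : i < j) {𝓕 : Finset (Finset ℕ)} {A : Finset ℕ} (hA : A ∈ 𝓕)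
    (hj : j ∈ A) (hi : i ∉ A) (hn : insert i (A.erase j) ∉ 𝓕) :
    ∑ B ∈ shift i j 𝓕, ∑ x ∈ B, x < ∑ B ∈ 𝓕, ∑ x ∈ B, x := by
  rw [shift, Finset.sum_image (shiftSet_injOn i j 𝓕)]
  apply Finset.sum_lt_sum
  · intro B _
    rw [shiftSet]
    split_ifs with h
    · exact (sum_insert_erase_lt hij h.1 h.2.1).le
    · exact le_rfl
  · refine ⟨A, hA, ?_⟩
    rw [shiftSet, if_pos ⟨hj, hi, hn⟩]
    exact sum_insert_erase_lt hij hj hi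

/-- A property of families that is preserved by the shifts within `S` can be retained while shifting
to a stable family. -/
lemma exists_stable (S : Finset ℕ) (Q : Finset (Finset ℕ) → Prop)
    (hQ : ∀ 𝓕 i j, i ∈ S → j ∈ S → i < j → Q 𝓕 → Q (shift i j 𝓕)) (𝓕 : Finset (Finset ℕ))
    (h : Q 𝓕) : ∃ 𝓖, Q 𝓖 ∧ IsStable S 𝓖 ∧ 𝓖.card = 𝓕.card := by
  induction hw : ∑ B ∈ 𝓕, ∑ x ∈ B, x using Nat.strong_induction_on generalizing 𝓕 with
  | _ w ih =>
    by_cases hs : IsStable S 𝓕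
    · exact ⟨𝓕, h, hs, rfl⟩
    · simp only [IsStable] at hs
      push Not at hs
      obtain ⟨i, j, hi, hj, hij, A, hA, hjA, hiA, hn⟩ := hs
      obtain ⟨𝓖, h1, h2, h3⟩ := ih _ (hw ▸ weight_shift_lt hij hA hjA hiA hn) (shift i j 𝓕)
        (hQ 𝓕 i j hi hj hij h) rfl
      exact ⟨𝓖, h1, h2, h3.trans (card_shift i j 𝓕)⟩

/-! ### Shifts of intersecting families -/

lemma inter_shift_aux {i j : ℕ} {𝓕 : Finset (Finset ℕ)}
    (hint : ∀ A ∈ 𝓕, ∀ B ∈ 𝓕, (A ∩ B).Nonempty) {A B : Finset ℕ} (hA : A ∈ 𝓕) (hiA : i ∉ A)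
    (hB : B ∈ 𝓕) (hB' : j ∈ B → i ∉ B → insert i (B.erase j) ∈ 𝓕) :
    (insert i (A.erase j) ∩ B).Nonempty := by
  by_cases hiB : i ∈ B
  · exact ⟨i, by simp [hiB]⟩
  by_cases hjB : j ∈ B
  · -- `A` meets the shift of `B`, and the common element is neither `i` nor `j`
    obtain ⟨y, hy⟩ := hint A hA _ (hB' hjB hiB)
    refine ⟨y, ?_⟩
    simp only [Finset.mem_inter, Finset.mem_insert, Finset.mem_erase] at hy ⊢
    obtain ⟨hyA, rfl | ⟨h1, h2⟩⟩ := hy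
    · exact absurd hyA hiA
    · exact ⟨Or.inr ⟨h1, hyA⟩, h2⟩
  · obtain ⟨y, hy⟩ := hint A hA B hB
    simp only [Finset.mem_inter] at hy
    have : y ≠ j := fun h => hjB (h ▸ hy.2)
    exact ⟨y, by simp [hy, this]⟩

lemma IsUnifInt.shift {n k i j : ℕ} (hi : i ∈ Finset.Icc 1 n) {𝓕 : Finset (Finset ℕ)}
    (h : IsUnifInt n k 𝓕) : IsUnifInt n k (shift i j 𝓕) := by
  obtain ⟨hsub, hcard, hint⟩ := h
  refine ⟨?_, ?_, ?_⟩
  · intro A hA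
    rcases mem_shift_iff.1 hA with ⟨hA, -⟩ | ⟨-, B, hB, -, -, rfl⟩
    · exact hsub A hA
    · exact Finset.insert_subset hi ((Finset.erase_subset _ _).trans (hsub B hB))
  · intro A hA
    rcases mem_shift_iff.1 hA with ⟨hA, -⟩ | ⟨-, B, hB, hjB, hiB, rfl⟩
    · exact hcard A hA
    · rw [Finset.card_insert_of_notMem (by simp [hiB]), Finset.card_erase_add_one hjB, hcard B hB]
  · intro A hA B hB
    rcases mem_shift_iff.1 hA with ⟨hA₀, hA'⟩ | ⟨-, A, hA₀, -, hiA, rfl⟩ <;>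
      rcases mem_shift_iff.1 hB with ⟨hB₀, hB'⟩ | ⟨-, B, hB₀, -, hiB, rfl⟩
    · exact hint A hA₀ B hB₀
    · rw [Finset.inter_comm]
      exact inter_shift_aux hint hB₀ hiB hA₀ hA'
    · exact inter_shift_aux hint hA₀ hiA hB₀ hB'
    · exact ⟨i, by simp⟩

/-- If the `(i, j)`-shift turns a nontrivial family into a trivial one, then every member meets
`{i, j}`. -/
lemma meets_of_trivial {i j x : ℕ} {𝓕 : Finset (Finset ℕ)} (hne : ∀ x : ℕ, ∃ F ∈ 𝓕, x ∉ F)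
    (hx : ∀ A ∈ shift i j 𝓕, x ∈ A) : ∀ A ∈ 𝓕, i ∈ A ∨ j ∈ A := by
  -- the member missing `x` must have moved, so the common element `x` can only be `i`
  have hxi : x = i := by
    obtain ⟨B, hB, hxB⟩ := hne x
    by_contra hxi
    by_cases h : j ∈ B ∧ i ∉ B ∧ insert i (B.erase j) ∉ 𝓕
    · have := hx _ (mem_shift_iff.2 (Or.inr ⟨h.2.2, B, hB, h.1, h.2.1, rfl⟩))
      simp [hxi, hxB] at this
    · exact hxB (hx B (mem_shift_iff.2 (Or.inl ⟨hB, by tauto⟩)))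
  subst hxi
  intro A hA
  by_contra hcon
  push Not at hcon
  exact hcon.1 (hx A (mem_shift_iff.2 (Or.inl ⟨hA, fun h => absurd h hcon.2⟩)))

/-! ### Families containing all `k`-subsets of a `(k+1)`-set -/

lemma HasSimplex.nontrivial {n k : ℕ} {𝓕 : Finset (Finset ℕ)} (h : HasSimplex n k 𝓕) (x : ℕ) :
    ∃ F ∈ 𝓕, x ∉ F := by
  obtain ⟨Y, -, hY, h⟩ := h
  by_cases hx : x ∈ Y
  · exact ⟨_, h x hx, by simp⟩
  · obtain ⟨y, hy⟩ := Finset.card_pos.1 (by omega : 0 < Y.card)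
    exact ⟨_, h y hy, by simp [hx]⟩

/-- If `j ∈ Y` and `i ∉ Y`, the shifted family contains the `k`-subsets of `Y` with `j` replaced by
`i`; in all other cases it still contains the `k`-subsets of `Y` itself. -/
lemma HasSimplex.shift {n k i j : ℕ} (hi : i ∈ Finset.Icc 1 n) (hij : i < j)
    {𝓕 : Finset (Finset ℕ)} (h : HasSimplex n k 𝓕) : HasSimplex n k (shift i j 𝓕) := by
  obtain ⟨Y, hYn, hY, h⟩ := h
  by_cases hc : j ∈ Y ∧ i ∉ Y
  · obtain ⟨hj, hiY⟩ := hc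
    refine ⟨insert i (Y.erase j), Finset.insert_subset hi ((Finset.erase_subset _ _).trans hYn),
      ?_, ?_⟩
    · rw [Finset.card_insert_of_notMem (by simp [hiY]), Finset.card_erase_add_one hj, hY]
    · intro y hy
      rcases Finset.mem_insert.1 hy with rfl | hy
      · rw [Finset.erase_insert (by simp [hiY])]
        exact mem_shift_iff.2 (Or.inl ⟨h j hj, by simp⟩)
      · obtain ⟨hyj, hyY⟩ := Finset.mem_erase.1 hy
        have hyi : y ≠ i := fun e => hiY (e ▸ hyY)
        have e : (insert i (Y.erase j)).erase y = insert i ((Y.erase y).erase j) := by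
          rw [Finset.erase_insert_of_ne hyi.symm, Finset.erase_right_comm]
        rw [e]
        by_cases hm : insert i ((Y.erase y).erase j) ∈ 𝓕
        · exact mem_shift_iff.2 (Or.inl ⟨hm, by simp⟩)
        · exact mem_shift_iff.2 (Or.inr ⟨hm, Y.erase y, h y hyY, by simp [hj, hyj.symm],
            by simp [hiY], rfl⟩)
  · refine ⟨Y, hYn, hY, fun y hy => mem_shift_iff.2 (Or.inl ⟨h y hy, fun hj hiy => ?_⟩)⟩
    have hjY := Finset.mem_of_mem_erase hj
    have hiY : i ∈ Y := by tauto
    have hyi : y = i := by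
      by_contra hne
      exact hiy (Finset.mem_erase.2 ⟨Ne.symm hne, hiY⟩)
    subst hyi
    have e : insert y ((Y.erase y).erase j) = Y.erase j := by
      rw [Finset.erase_right_comm, Finset.insert_erase (Finset.mem_erase.2 ⟨hij.ne, hiY⟩)]
    rw [e]
    exact h j hjY

/-! ### Pushing to initial segments -/

lemma exists_initial (S : Finset ℕ) (m : ℕ) (hm : m ≤ S.card) :
    ∃ T ⊆ S, T.card = m ∧ ∀ t ∈ T, ∀ s ∈ S, s < t → s ∈ T := by
  induction m with
  | zero => exact ⟨∅, by simp⟩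
  | succ m ih =>
    obtain ⟨T, hTS, hT, hinit⟩ := ih (by omega)
    have hne : (S \ T).Nonempty := by
      rw [← Finset.card_pos, Finset.card_sdiff_of_subset hTS]; omega
    have hmin := Finset.mem_sdiff.1 (Finset.min'_mem _ hne)
    refine ⟨insert ((S \ T).min' hne) T, Finset.insert_subset hmin.1 hTS, ?_, ?_⟩
    · rw [Finset.card_insert_of_notMem hmin.2, hT]
    · intro t ht s hs hst
      by_cases hsT : s ∈ T
      · exact Finset.mem_insert_of_mem hsT
      rcases Finset.mem_insert.1 ht with rfl | ht
      · exact absurd (Finset.min'_le _ s (Finset.mem_sdiff.2 ⟨hs, hsT⟩)) (by omega)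
      · exact absurd (hinit t ht s hs hst) hsT

/-- In an `S`-stable family, the part `X ⊆ S` of a member `{c} ∪ X` can be pushed to any initial
segment `T` of `S` of the same size. -/
lemma push_to_initial {S T : Finset ℕ} {c : ℕ} {𝓕 : Finset (Finset ℕ)} (hst : IsStable S 𝓕)
    (hc : c ∉ S) (hTS : T ⊆ S) (hinit : ∀ t ∈ T, ∀ s ∈ S, s < t → s ∈ T) (X : Finset ℕ)
    (hXS : X ⊆ S) (hcard : X.card = T.card) (hX : insert c X ∈ 𝓕) : insert c T ∈ 𝓕 := by
  induction hm : (X \ T).card using Nat.strong_induction_on generalizing X with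
  | _ m ih =>
    by_cases hsub : X ⊆ T
    · rwa [← Finset.eq_of_subset_of_card_le hsub hcard.ge]
    · obtain ⟨x, hxX, hxT⟩ := Finset.not_subset.1 hsub
      have hsub' : ¬ T ⊆ X := fun h => hsub (Finset.eq_of_subset_of_card_le h hcard.le).ge
      obtain ⟨t, htT, htX⟩ := Finset.not_subset.1 hsub'
      have htx : t < x := by
        rcases lt_trichotomy t x with h | h | h
        · exact h
        · exact absurd (h ▸ htT) hxT
        · exact absurd (hinit t htT x (hXS hxX) h) hxT
      have htc : t ≠ c := fun e => hc (e ▸ hTS htT)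
      have hxc : x ≠ c := fun e => hc (e ▸ hXS hxX)
      have h1 := hst t x (hTS htT) (hXS hxX) htx _ hX (by simp [hxX]) (by simp [htX, htc])
      rw [Finset.erase_insert_of_ne hxc.symm, Finset.insert_comm] at h1
      refine ih _ ?_ (insert t (X.erase x))
        (Finset.insert_subset (hTS htT) ((Finset.erase_subset _ _).trans hXS)) ?_ h1 rfl
      · rw [← hm]
        apply Finset.card_lt_card
        refine Finset.ssubset_iff_subset_ne.2 ⟨?_, fun e => ?_⟩
        · intro y hy
          simp only [Finset.mem_sdiff, Finset.mem_insert, Finset.mem_erase] at hy ⊢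
          obtain ⟨rfl | h, hyT⟩ := hy
          · exact absurd htT hyT
          · exact ⟨h.2, hyT⟩
        · have := e ▸ Finset.mem_sdiff.2 ⟨hxX, hxT⟩
          simp [htx.ne'] at this
      · rw [Finset.card_insert_of_notMem (by simp [htX]), Finset.card_erase_add_one hxX, hcard]

/-! ### Families all of whose members meet a fixed pair -/

/-- A `k`-uniform intersecting family in `[n]` all of whose members meet `{a, b}`, which contains
every `k`-set through both `a` and `b`, and in which neither `a` nor `b` is common to all members. -/
def IsPairFamily (n k a b : ℕ) (𝓕 : Finset (Finset ℕ)) : Prop :=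
  IsUnifInt n k 𝓕 ∧ (∀ A ∈ 𝓕, a ∈ A ∨ b ∈ A) ∧
    (∀ G ⊆ Finset.Icc 1 n, G.card = k → a ∈ G → b ∈ G → G ∈ 𝓕) ∧
    (∃ A ∈ 𝓕, a ∉ A) ∧ ∃ A ∈ 𝓕, b ∉ A

/-- Each member of a family has a counterpart in the shift containing the same elements other than
`i` and `j`. -/
lemma exists_counterpart {i j : ℕ} {𝓕 : Finset (Finset ℕ)} {A : Finset ℕ} (hA : A ∈ 𝓕) :
    ∃ B ∈ shift i j 𝓕, ∀ c, c ≠ i → c ≠ j → (c ∈ B ↔ c ∈ A) := by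
  refine ⟨shiftSet i j 𝓕 A, Finset.mem_image_of_mem _ hA, fun c hi hj => ?_⟩
  rw [shiftSet]
  split_ifs <;> simp [hi, hj]

lemma IsPairFamily.shift {n k a b i j : ℕ} (hi : i ∈ (Finset.Icc 1 n \ {a, b}))
    (hj : j ∈ (Finset.Icc 1 n \ {a, b})) {𝓕 : Finset (Finset ℕ)} (h : IsPairFamily n k a b 𝓕) :
    IsPairFamily n k a b (shift i j 𝓕) := by
  simp only [Finset.mem_sdiff, Finset.mem_insert, Finset.mem_singleton, not_or] at hi hj
  obtain ⟨hi, hia, hib⟩ := hi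
  obtain ⟨-, hja, hjb⟩ := hj
  obtain ⟨hu, hmeet, hall, ⟨A, hA, haA⟩, ⟨B, hB, hbB⟩⟩ := h
  refine ⟨hu.shift hi, ?_, ?_, ?_, ?_⟩
  · intro A hA
    rcases mem_shift_iff.1 hA with ⟨hA, -⟩ | ⟨-, B, hB, -, -, rfl⟩
    · exact hmeet A hA
    · simpa [Ne.symm hia, Ne.symm hib, Ne.symm hja, Ne.symm hjb] using hmeet B hB
  · intro G hG hGk haG hbG
    refine mem_shift_iff.2 (Or.inl ⟨hall G hG hGk haG hbG, fun hjG hiG => ?_⟩)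
    apply hall
    · exact Finset.insert_subset hi ((Finset.erase_subset _ _).trans hG)
    · rw [Finset.card_insert_of_notMem (by simp [hiG]), Finset.card_erase_add_one hjG, hGk]
    · simp [haG, Ne.symm hja]
    · simp [hbG, Ne.symm hjb]
  · obtain ⟨C, hC, h⟩ := exists_counterpart (i := i) (j := j) hA
    exact ⟨C, hC, by rwa [h a (Ne.symm hia) (Ne.symm hja)]⟩
  · obtain ⟨C, hC, h⟩ := exists_counterpart (i := i) (j := j) hB
    exact ⟨C, hC, by rwa [h b (Ne.symm hib) (Ne.symm hjb)]⟩

lemma IsPairFamily.hasSimplex {n k a b : ℕ} (hab : a ≠ b) (ha : a ∈ Finset.Icc 1 n)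
    (hb : b ∈ Finset.Icc 1 n) {𝓕 : Finset (Finset ℕ)} (h : IsPairFamily n k a b 𝓕)
    (hst : IsStable (Finset.Icc 1 n \ {a, b}) 𝓕) : HasSimplex n k 𝓕 := by
  obtain ⟨⟨hsub, hcard, -⟩, hmeet, hall, ⟨B, hB, haB⟩, ⟨A, hA, hbA⟩⟩ := h
  have haA : a ∈ A := (hmeet A hA).resolve_right hbA
  have hbB : b ∈ B := (hmeet B hB).resolve_left haB
  have hAS : A.erase a ⊆ Finset.Icc 1 n \ {a, b} := by
    intro x hx
    obtain ⟨hxa, hxA⟩ := Finset.mem_erase.1 hx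
    have hxb : x ≠ b := fun e => hbA (e ▸ hxA)
    simp [hxa, hxb, -Finset.mem_Icc, hsub A hA hxA]
  have hBS : B.erase b ⊆ Finset.Icc 1 n \ {a, b} := by
    intro x hx
    obtain ⟨hxb, hxB⟩ := Finset.mem_erase.1 hx
    have hxa : x ≠ a := fun e => haB (e ▸ hxB)
    simp [hxa, hxb, -Finset.mem_Icc, hsub B hB hxB]
  have hAc : (A.erase a).card + 1 = k := by rw [Finset.card_erase_add_one haA, hcard A hA]
  have hBc : (B.erase b).card + 1 = k := by rw [Finset.card_erase_add_one hbB, hcard B hB]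
  obtain ⟨T, hTS, hT, hinit⟩ := exists_initial _ _ (Finset.card_le_card hAS)
  have haS : a ∉ Finset.Icc 1 n \ {a, b} := by simp
  have hbS : b ∉ Finset.Icc 1 n \ {a, b} := by simp
  have haT : a ∉ T := fun h => haS (hTS h)
  have hbT : b ∉ T := fun h => hbS (hTS h)
  have h1 : insert a T ∈ 𝓕 := push_to_initial hst haS hTS hinit _ hAS hT.symm
    (by rwa [Finset.insert_erase haA])
  have h2 : insert b T ∈ 𝓕 := push_to_initial hst hbS hTS hinit _ hBS (by omega)
    (by rwa [Finset.insert_erase hbB])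
  have hYn : insert a (insert b T) ⊆ Finset.Icc 1 n :=
    Finset.insert_subset ha (Finset.insert_subset hb (hTS.trans Finset.sdiff_subset))
  have hYc : (insert a (insert b T)).card = k + 1 := by
    rw [Finset.card_insert_of_notMem (by simp [hab, haT]), Finset.card_insert_of_notMem hbT]
    omega
  refine ⟨insert a (insert b T), hYn, hYc, fun y hy => ?_⟩
  by_cases hya : y = a
  · subst hya
    rwa [Finset.erase_insert (by simp [hab, haT])]
  by_cases hyb : y = b
  · subst hyb
    rwa [Finset.erase_insert_of_ne hab, Finset.erase_insert hbT]
  apply hall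
  · exact (Finset.erase_subset _ _).trans hYn
  · rw [Finset.card_erase_of_mem hy, hYc]; rfl
  · simp [Ne.symm hya]
  · simp [Ne.symm hyb]

/-- A nontrivial family all of whose members meet `{a, b}` becomes a pair family once all `k`-sets
through `a` and `b` are added. -/
lemma exists_pairFamily {n k a b : ℕ} {𝓕 : Finset (Finset ℕ)} (hu : IsUnifInt n k 𝓕)
    (hne : ∀ x : ℕ, ∃ F ∈ 𝓕, x ∉ F) (hmeet : ∀ A ∈ 𝓕, a ∈ A ∨ b ∈ A) :
    ∃ 𝓖, IsPairFamily n k a b 𝓖 ∧ 𝓕.card ≤ 𝓖.card := by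
  obtain ⟨hsub, hcard, hint⟩ := hu
  have hmem : ∀ A, A ∈ 𝓕 ∪ ((Finset.Icc 1 n).powersetCard k).filter (fun G => a ∈ G ∧ b ∈ G) ↔
      A ∈ 𝓕 ∨ ((A ⊆ Finset.Icc 1 n ∧ A.card = k) ∧ a ∈ A ∧ b ∈ A) := by
    intro A
    rw [Finset.mem_union, Finset.mem_filter, Finset.mem_powersetCard]
  refine ⟨𝓕 ∪ ((Finset.Icc 1 n).powersetCard k).filter (fun G => a ∈ G ∧ b ∈ G),
    ⟨⟨?_, ?_, ?_⟩, ?_, ?_, ?_, ?_⟩, Finset.card_le_card Finset.subset_union_left⟩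
  · intro A hA
    rcases (hmem A).1 hA with h | h
    · exact hsub A h
    · exact h.1.1
  · intro A hA
    rcases (hmem A).1 hA with h | h
    · exact hcard A h
    · exact h.1.2
  · have hmeet' : ∀ A B : Finset ℕ, (a ∈ A ∨ b ∈ A) → a ∈ B → b ∈ B → (A ∩ B).Nonempty := by
      rintro A B (h | h) haB hbB
      · exact ⟨a, Finset.mem_inter.2 ⟨h, haB⟩⟩
      · exact ⟨b, Finset.mem_inter.2 ⟨h, hbB⟩⟩
    intro A hA B hB
    rcases (hmem A).1 hA with hA | hA <;> rcases (hmem B).1 hB with hB | hB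
    · exact hint A hA B hB
    · exact hmeet' A B (hmeet A hA) hB.2.1 hB.2.2
    · rw [Finset.inter_comm]
      exact hmeet' B A (hmeet B hB) hA.2.1 hA.2.2
    · exact hmeet' A B (Or.inl hA.2.1) hB.2.1 hB.2.2
  · intro A hA
    rcases (hmem A).1 hA with h | h
    · exact hmeet A h
    · exact Or.inl h.2.1
  · intro G hG hGk haG hbG
    exact (hmem G).2 (Or.inr ⟨⟨hG, hGk⟩, haG, hbG⟩)
  · obtain ⟨A, hA, h⟩ := hne a
    exact ⟨A, (hmem A).2 (Or.inl hA), h⟩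
  · obtain ⟨A, hA, h⟩ := hne b
    exact ⟨A, (hmem A).2 (Or.inl hA), h⟩

/-! ### The Frankl–Füredi lemma -/

/-- The Frankl–Füredi lemma. -/
theorem frankl_furedi (n k : ℕ) (hk : 0 < k) (hn0 : 0 < n)
    (𝓕 : Finset (Finset ℕ))
    (hsub : ∀ F ∈ 𝓕, F ⊆ Finset.Icc 1 n)
    (hcard : ∀ F ∈ 𝓕, F.card = k)
    (hint : ∀ A ∈ 𝓕, ∀ B ∈ 𝓕, (A ∩ B).Nonempty)
    (hempty : ∀ x : ℕ, ∃ F ∈ 𝓕, x ∉ F) :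
    ∃ 𝓕' : Finset (Finset ℕ),
      (∀ F ∈ 𝓕', F ⊆ Finset.Icc 1 n) ∧
      (∀ F ∈ 𝓕', F.card = k) ∧
      IsShifted n 𝓕' ∧
      (∀ A ∈ 𝓕', ∀ B ∈ 𝓕', (A ∩ B).Nonempty) ∧
      (∀ x : ℕ, ∃ F ∈ 𝓕', x ∉ F) ∧
      𝓕.card ≤ 𝓕'.card := by
  -- either nontriviality survives all shifts, or a family of the same size breaks at some `(a, b)`
  by_cases hgood : ∀ 𝓖 i j, i ∈ Finset.Icc 1 n → j ∈ Finset.Icc 1 n → i < j →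
      (IsUnifInt n k 𝓖 ∧ (∀ x : ℕ, ∃ F ∈ 𝓖, x ∉ F) ∧ 𝓖.card = 𝓕.card) →
      (∀ x : ℕ, ∃ F ∈ shift i j 𝓖, x ∉ F)
  · obtain ⟨𝓖, ⟨⟨h1, h2, h3⟩, h4, h5⟩, hst, -⟩ := exists_stable (Finset.Icc 1 n)
      (fun 𝓖 => IsUnifInt n k 𝓖 ∧ (∀ x : ℕ, ∃ F ∈ 𝓖, x ∉ F) ∧ 𝓖.card = 𝓕.card)
      (fun 𝓖 i j hi hj hij h => ⟨h.1.shift hi, hgood 𝓖 i j hi hj hij h,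
        (card_shift i j 𝓖).trans h.2.2⟩) 𝓕 ⟨⟨hsub, hcard, hint⟩, hempty, rfl⟩
    exact ⟨𝓖, h1, h2, hst, h3, h4, h5.ge⟩
  · push Not at hgood
    obtain ⟨𝓖, a, b, ha, hb, hab, ⟨hu, hne, hc⟩, x, hx⟩ := hgood
    obtain ⟨𝓗, hp, hc1⟩ := exists_pairFamily hu hne (meets_of_trivial hne hx)
    obtain ⟨𝓘, hp', hst, hc2⟩ := exists_stable (Finset.Icc 1 n \ {a, b}) (IsPairFamily n k a b)
      (fun _ _ _ hi hj _ h => h.shift hi hj) 𝓗 hp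
    obtain ⟨𝓙, ⟨⟨h1, h2, h3⟩, h4⟩, hst', hc3⟩ := exists_stable (Finset.Icc 1 n)
      (fun 𝓖 => IsUnifInt n k 𝓖 ∧ HasSimplex n k 𝓖)
      (fun _ _ _ hi _ hij h => ⟨h.1.shift hi, h.2.shift hi hij⟩) 𝓘
      ⟨hp'.1, hp'.hasSimplex hab.ne ha hb hst⟩
    exact ⟨𝓙, h1, h2, hst', h3, h4.nontrivial, by omega⟩
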